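/- No minimal Lorentzian surface in 𝔼⁴₁ has a non-harmonic biharmonic Gauss map (Corollary 4.3): in the setting of a minimal Lorentzian surface x(s,t) = α(s) + β(t) in null coordinates with I₁ × I₂ connected, if Δ(Δν) = 0 at every point, where Δξ := (2/m²)·∂²ξ/∂s∂t, then Δν = 0 at every point; i.e. if the Gauss map is biharmonic then it is harmonic. -/

import Mathlib

noncomputable section

/-- The Minkowski bilinear form on `ℝ⁴ = Fin 4 → ℝ`:
`B(v,w) = -v₀w₀ + v₁w₁ + v₂w₂ + v₃w₃`. -/
def B4 (v w : Fin 4 → ℝ) : ℝ :=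
  -(v 0 * w 0) + v 1 * w 1 + v 2 * w 2 + v 3 * w 3

/-- The wedge product `v ∧ w`, modelled concretely as the antisymmetric array
`(i,j) ↦ vᵢwⱼ - vⱼwᵢ` (a faithful model of the second exterior power `Λ²(ℝ⁴)`). -/
def wedge (v w : Fin 4 → ℝ) : Fin 4 → Fin 4 → ℝ :=
  fun i j => v i * w j - v j * w i

/-- Partial derivative of a two-parameter map with respect to the first variable. -/
def pds {E : Type*} [NormedAddCommGroup E] [NormedSpace ℝ E]
    (x : ℝ → ℝ → E) (s t : ℝ) : E :=
  deriv (fun u => x u t) s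

/-- Partial derivative of a two-parameter map with respect to the second variable. -/
def pdt {E : Type*} [NormedAddCommGroup E] [NormedSpace ℝ E]
    (x : ℝ → ℝ → E) (s t : ℝ) : E :=
  deriv (fun u => x s u) t

/-- `m²(s,t) = -B(α'(s), β'(t))`, the conformal factor of the induced metric
`-m²(ds⊗dt + dt⊗ds)` of the minimal Lorentzian surface `x(s,t) = α(s) + β(t)`. -/
def msq (α β : ℝ → Fin 4 → ℝ) (s t : ℝ) : ℝ :=
  -B4 (deriv α s) (deriv β t)

/-- `η₁ = h(∂s,∂s)`: the component of `x_{ss} = α''` orthogonal to the tangent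
plane `span{α'(s), β'(t)}`. -/
def eta1 (α β : ℝ → Fin 4 → ℝ) (s t : ℝ) : Fin 4 → ℝ :=
  deriv (deriv α) s
    - (B4 (deriv (deriv α) s) (deriv β t) / B4 (deriv α s) (deriv β t)) • deriv α s

/-- `η₂ = h(∂t,∂t)`: the component of `x_{tt} = β''` orthogonal to the tangent
plane `span{α'(s), β'(t)}`. -/
def eta2 (α β : ℝ → Fin 4 → ℝ) (s t : ℝ) : Fin 4 → ℝ :=
  deriv (deriv β) t
    - (B4 (deriv (deriv β) t) (deriv α s) / B4 (deriv α s) (deriv β t)) • deriv β t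

/-- The Gauss map `ν = (1/m²)·(α'(s) ∧ β'(t))`, valued in (a model of) `Λ²(ℝ⁴)`. -/
def gaussMap (α β : ℝ → Fin 4 → ℝ) (s t : ℝ) : Fin 4 → Fin 4 → ℝ :=
  (1 / msq α β s t) • wedge (deriv α s) (deriv β t)

/-- The Laplace–Beltrami operator of the induced metric `-m²(ds⊗dt + dt⊗ds)`
(with the sign convention of the paper) acting on `Λ²(ℝ⁴)`-valued maps:
`Δξ = (2/m²)·∂²ξ/∂s∂t`. -/
def lap (α β : ℝ → Fin 4 → ℝ) (ξ : ℝ → ℝ → (Fin 4 → Fin 4 → ℝ)) (s t : ℝ) :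
    Fin 4 → Fin 4 → ℝ :=
  (2 / msq α β s t) • pds (pdt ξ) s t

/-!
Let `F(s, t) ∈ ℂ³` be the self-dual part of `ν(s, t)`. Since `α'` and `β'` are null, `F · F = 1`,
`F(s, t) × F(s, t') = i (F(s, t') - F(s, t))` and `F(s, t) × F(s', t) = -i (F(s', t) - F(s, t))`.
Differentiating, `F_t` and `F_s` are eigenvectors of `F × ·` for `i` and `-i`. Hence they are
isotropic and orthogonal to `F`, and `F_{st} = -h F` with `h = F_s · F_t`.

Biharmonicity now reads `(g F)_{st} = 0` with `g = -(2/m²) h`. The products of this equation with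
`F_t` and with `F` are `g_t h = 0` and `g_{st} = g h`. Where `h ≠ 0`, the first gives `g_t = 0`
nearby, so `g_{st} = 0`, and the second then gives `g h = 0`, which is absurd. Thus `h = 0`,
`F_{st} = 0`, and `ν`, a real-linear function of `F`, satisfies `ν_{st} = 0`.
-/

open Filter Function
open scoped Matrix Topology

section PartialDerivatives

variable {E G : Type*} [NormedAddCommGroup E] [NormedSpace ℝ E] [NormedAddCommGroup G]
  [NormedSpace ℝ G] {f g : ℝ → ℝ → E} {s t : ℝ} {p : ℝ × ℝ} {m n : WithTop ℕ∞}

theorem hasDerivAt_fst_slice (hf : DifferentiableAt ℝ (uncurry f) (s, t)) :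
    HasDerivAt (fun u => f u t) (fderiv ℝ (uncurry f) (s, t) (1, 0)) s :=
  hf.hasFDerivAt.comp_hasDerivAt (f := fun u => (u, t)) s
    ((hasDerivAt_id s).prodMk (hasDerivAt_const s t))

theorem hasDerivAt_snd_slice (hf : DifferentiableAt ℝ (uncurry f) (s, t)) :
    HasDerivAt (fun u => f s u) (fderiv ℝ (uncurry f) (s, t) (0, 1)) t :=
  hf.hasFDerivAt.comp_hasDerivAt (f := fun u => (s, u)) t
    ((hasDerivAt_const t s).prodMk (hasDerivAt_id t))

theorem hasDerivAt_pds (hf : DifferentiableAt ℝ (uncurry f) (s, t)) :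
    HasDerivAt (fun u => f u t) (pds f s t) s :=
  (hasDerivAt_fst_slice hf).differentiableAt.hasDerivAt

theorem hasDerivAt_pdt (hf : DifferentiableAt ℝ (uncurry f) (s, t)) :
    HasDerivAt (fun u => f s u) (pdt f s t) t :=
  (hasDerivAt_snd_slice hf).differentiableAt.hasDerivAt

theorem eventually_differentiableAt (hf : ContDiffAt ℝ n (uncurry f) p) (hn : 1 ≤ n) :
    ∀ᶠ q in 𝓝 p, DifferentiableAt ℝ (uncurry f) q :=
  ((hf.of_le hn).eventually (by simp)).mono fun _ hq => hq.differentiableAt one_ne_zero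

theorem uncurry_pds_eventuallyEq (hf : ContDiffAt ℝ n (uncurry f) p) (hn : 1 ≤ n) :
    uncurry (pds f) =ᶠ[𝓝 p] fun q => fderiv ℝ (uncurry f) q (1, 0) :=
  (eventually_differentiableAt hf hn).mono fun _ hq => (hasDerivAt_fst_slice hq).deriv

theorem uncurry_pdt_eventuallyEq (hf : ContDiffAt ℝ n (uncurry f) p) (hn : 1 ≤ n) :
    uncurry (pdt f) =ᶠ[𝓝 p] fun q => fderiv ℝ (uncurry f) q (0, 1) :=
  (eventually_differentiableAt hf hn).mono fun _ hq => (hasDerivAt_snd_slice hq).deriv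

theorem contDiffAt_pds (hf : ContDiffAt ℝ n (uncurry f) p) (hmn : m + 1 ≤ n) :
    ContDiffAt ℝ m (uncurry (pds f)) p :=
  ((hf.fderiv_right hmn).clm_apply contDiffAt_const).congr_of_eventuallyEq
    (uncurry_pds_eventuallyEq hf (le_add_self.trans hmn))

theorem contDiffAt_pdt (hf : ContDiffAt ℝ n (uncurry f) p) (hmn : m + 1 ≤ n) :
    ContDiffAt ℝ m (uncurry (pdt f)) p :=
  ((hf.fderiv_right hmn).clm_apply contDiffAt_const).congr_of_eventuallyEq
    (uncurry_pdt_eventuallyEq hf (le_add_self.trans hmn))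

theorem pds_eq_of_eventuallyEq (h : uncurry f =ᶠ[𝓝 (s, t)] uncurry g) : pds f s t = pds g s t :=
  EventuallyEq.deriv_eq (h.comp_tendsto (tendsto_id.prodMk_nhds tendsto_const_nhds))

theorem pdt_eq_of_eventuallyEq (h : uncurry f =ᶠ[𝓝 (s, t)] uncurry g) : pdt f s t = pdt g s t :=
  EventuallyEq.deriv_eq (h.comp_tendsto (tendsto_const_nhds.prodMk_nhds tendsto_id))

theorem pds_pdt_eq_of_eventuallyEq (h : uncurry f =ᶠ[𝓝 (s, t)] uncurry g) :
    pds (pdt f) s t = pds (pdt g) s t :=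
  pds_eq_of_eventuallyEq (h.eventuallyEq_nhds.mono fun _ hq => pdt_eq_of_eventuallyEq hq)

theorem pds_pdt_comm (hf : ContDiffAt ℝ 2 (uncurry f) (s, t)) :
    pds (pdt f) s t = pdt (pds f) s t := by
  have hf' : DifferentiableAt ℝ (fderiv ℝ (uncurry f)) (s, t) :=
    (hf.fderiv_right (m := 1) one_add_one_eq_two.le).differentiableAt one_ne_zero
  have hst : pds (pdt f) s t = fderiv ℝ (fderiv ℝ (uncurry f)) (s, t) (1, 0) (0, 1) := by
    rw [pds_eq_of_eventuallyEq (g := fun s t => fderiv ℝ (uncurry f) (s, t) (0, 1))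
      (uncurry_pdt_eventuallyEq hf one_le_two)]
    exact ((hasDerivAt_fst_slice (f := fun s t => fderiv ℝ (uncurry f) (s, t)) hf').clm_apply
      (hasDerivAt_const s _)).deriv.trans (by simp only [map_zero, add_zero]; rfl)
  have hts : pdt (pds f) s t = fderiv ℝ (fderiv ℝ (uncurry f)) (s, t) (0, 1) (1, 0) := by
    rw [pdt_eq_of_eventuallyEq (g := fun s t => fderiv ℝ (uncurry f) (s, t) (1, 0))
      (uncurry_pds_eventuallyEq hf one_le_two)]
    exact ((hasDerivAt_snd_slice (f := fun s t => fderiv ℝ (uncurry f) (s, t)) hf').clm_apply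
      (hasDerivAt_const t _)).deriv.trans (by simp only [map_zero, add_zero]; rfl)
  rw [hst, hts]
  exact hf.isSymmSndFDerivAt (by simp) _ _

theorem pds_pdt_clm_apply (L : E →L[ℝ] G) (hf : ContDiffAt ℝ 2 (uncurry f) (s, t)) :
    pds (pdt fun s t => L (f s t)) s t = L (pds (pdt f) s t) := by
  have h : uncurry (pdt fun s t => L (f s t)) =ᶠ[𝓝 (s, t)] uncurry fun s t => L (pdt f s t) :=
    (eventually_differentiableAt hf one_le_two).mono fun q hq =>
      (L.hasFDerivAt.comp_hasDerivAt q.2 (hasDerivAt_pdt hq)).deriv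
  rw [pds_eq_of_eventuallyEq h]
  have hf' := (contDiffAt_pdt (m := 1) hf one_add_one_eq_two.le).differentiableAt one_ne_zero
  exact (L.hasFDerivAt.comp_hasDerivAt s (hasDerivAt_pds hf')).deriv

theorem pds_pdt_smul {𝕜 : Type*} [NontriviallyNormedField 𝕜] [NormedAlgebra ℝ 𝕜]
    [NormedSpace 𝕜 E] [IsScalarTower ℝ 𝕜 E] {c : ℝ → ℝ → 𝕜}
    (hc : ContDiffAt ℝ 2 (uncurry c) (s, t)) (hf : ContDiffAt ℝ 2 (uncurry f) (s, t)) :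
    pds (pdt fun s t => c s t • f s t) s t =
      c s t • pds (pdt f) s t + pds c s t • pdt f s t +
        (pdt c s t • pds f s t + pds (pdt c) s t • f s t) := by
  have h : uncurry (pdt fun s t => c s t • f s t) =ᶠ[𝓝 (s, t)]
      uncurry fun s t => c s t • pdt f s t + pdt c s t • f s t := by
    filter_upwards [eventually_differentiableAt hc one_le_two,
      eventually_differentiableAt hf one_le_two] with q hcq hfq
    exact ((hasDerivAt_pdt hcq).smul (hasDerivAt_pdt hfq)).deriv
  have hc' := (contDiffAt_pdt (m := 1) hc one_add_one_eq_two.le).differentiableAt one_ne_zero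
  have hf' := (contDiffAt_pdt (m := 1) hf one_add_one_eq_two.le).differentiableAt one_ne_zero
  rw [pds_eq_of_eventuallyEq h]
  exact (((hasDerivAt_pds (hc.differentiableAt two_ne_zero)).smul (hasDerivAt_pds hf')).add
    ((hasDerivAt_pds hc').smul (hasDerivAt_pds (hf.differentiableAt two_ne_zero)))).deriv

theorem pds_pdt_smul_pds_pdt_clm_apply (L : E →L[ℝ] G) {r : ℝ → ℝ → ℝ}
    (hr : ContDiffAt ℝ 2 (uncurry r) (s, t)) (hf : ContDiffAt ℝ 4 (uncurry f) (s, t)) :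
    pds (pdt fun s t => r s t • pds (pdt fun s t => L (f s t)) s t) s t =
      L (pds (pdt fun s t => r s t • pds (pdt f) s t) s t) := by
  have h : (uncurry fun s t => r s t • pds (pdt fun s t => L (f s t)) s t) =ᶠ[𝓝 (s, t)]
      uncurry fun s t => L (r s t • pds (pdt f) s t) := by
    filter_upwards [(hf.of_le (m := 2) (by norm_num)).eventually (by simp)] with q hq
    simp only [uncurry, pds_pdt_clm_apply (s := q.1) (t := q.2) L hq, map_smul]
  rw [pds_pdt_eq_of_eventuallyEq h]
  exact pds_pdt_clm_apply L (hr.smul (contDiffAt_pds (m := 2)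
    (contDiffAt_pdt (m := 3) hf (by norm_num)) (by norm_num)))

theorem pds_pdt_eq_zero_of_pdt_mul_eq_zero {𝕜 : Type*} [NormedField 𝕜] [NormedSpace ℝ 𝕜]
    {g h : ℝ → ℝ → 𝕜} (hcont : ContinuousAt (uncurry h) (s, t)) (hne : h s t ≠ 0)
    (hgh : ∀ᶠ q in 𝓝 (s, t), pdt g q.1 q.2 * h q.1 q.2 = 0) : pds (pdt g) s t = 0 := by
  have hpdt : uncurry (pdt g) =ᶠ[𝓝 (s, t)] uncurry fun _ _ => 0 := by
    filter_upwards [hgh, hcont.eventually_ne hne] with q hq hq₀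
    exact (mul_eq_zero.1 hq).resolve_right hq₀
  rw [pds_eq_of_eventuallyEq hpdt]
  exact deriv_const s 0

end PartialDerivatives

section CrossProduct

variable {𝕜 : Type*} [RCLike 𝕜] {u v : ℝ → Fin 3 → 𝕜} {u' v' : Fin 3 → 𝕜} {x : ℝ}

theorem hasDerivAt_cross (hu : HasDerivAt u u' x) (hv : HasDerivAt v v' x) :
    HasDerivAt (fun y => u y ⨯₃ v y) (u x ⨯₃ v' + u' ⨯₃ v x) x :=
  ((crossProduct (R := 𝕜)).toContinuousBilinearMap.bilinearRestrictScalars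
    ℝ).hasDerivAt_of_bilinear (fun _ => hu) (fun _ => hv)

theorem cross_deriv_eq_smul_deriv {c : 𝕜} (hu : HasDerivAt u u' x)
    (h : ∀ᶠ y in 𝓝 x, u x ⨯₃ u y = c • (u y - u x)) : u x ⨯₃ u' = c • u' := by
  have hcross : HasDerivAt (fun y => u x ⨯₃ u y) (u x ⨯₃ u') x := by
    simpa using hasDerivAt_cross (hasDerivAt_const x (u x)) hu
  exact hcross.unique (((hu.sub_const (u x)).const_smul c).congr_of_eventuallyEq h)

end CrossProduct

section CrossEigenvector

variable {R : Type*} [CommRing R] {c : R} {u v w : Fin 3 → R}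

theorem dotProduct_eq_zero_of_cross_eq_smul [NoZeroDivisors R] (hc : c ≠ 0)
    (h : u ⨯₃ v = c • v) : u ⬝ᵥ v = 0 := by
  have := dot_self_cross u v
  rw [h, dotProduct_smul, smul_eq_mul] at this
  exact (mul_eq_zero.1 this).resolve_left hc

theorem dotProduct_self_eq_zero_of_cross_eq_smul [NoZeroDivisors R] (hc : c ≠ 0)
    (h : u ⨯₃ v = c • v) : v ⬝ᵥ v = 0 := by
  have := dot_cross_self u v
  rw [h, dotProduct_smul, smul_eq_mul] at this
  exact (mul_eq_zero.1 this).resolve_left hc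

theorem smul_cross_eq_dotProduct_smul (hv : u ⨯₃ v = c • v) (huw : u ⬝ᵥ w = 0) :
    c • (w ⨯₃ v) = (w ⬝ᵥ v) • u := by
  rw [← map_smul, ← hv, cross_cross_eq_smul_sub_smul', huw, zero_smul, sub_zero]

end CrossEigenvector

/-- The energy density `∂F/∂s · ∂F/∂t` of `F` in null coordinates, for the complex bilinear dot
product. -/
def energyDensity (F : ℝ → ℝ → Fin 3 → ℂ) (s t : ℝ) : ℂ :=
  pds F s t ⬝ᵥ pdt F s t

theorem contDiffAt_energyDensity {F : ℝ → ℝ → Fin 3 → ℂ} {p : ℝ × ℝ} {m n : WithTop ℕ∞}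
    (hF : ContDiffAt ℝ n (uncurry F) p) (hmn : m + 1 ≤ n) :
    ContDiffAt ℝ m (uncurry (energyDensity F)) p :=
  show ContDiffAt ℝ m (fun q => ∑ i, pds F q.1 q.2 i * pdt F q.1 q.2 i) p from
    ContDiffAt.sum fun i _ => (contDiffAt_pi.1 (contDiffAt_pds hF hmn) i).mul
      (contDiffAt_pi.1 (contDiffAt_pdt hF hmn) i)

/-- A map `F` of two null coordinates `s`, `t` into the complex unit sphere of `ℂ³` which is
paraholomorphic on `U`: the tangent space of the sphere at `F` is the sum of the `∓i`-eigenlines of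
`F ⨯₃ ·`, and `∂F/∂s`, `∂F/∂t` lie in the `-i`- and the `i`-eigenline. -/
structure IsParaholomorphicOn (F : ℝ → ℝ → Fin 3 → ℂ) (U : Set (ℝ × ℝ)) : Prop where
  dotProduct_self : ∀ ⦃s t⦄, (s, t) ∈ U → F s t ⬝ᵥ F s t = 1
  cross_pds : ∀ ⦃s t⦄, (s, t) ∈ U → F s t ⨯₃ pds F s t = -Complex.I • pds F s t
  cross_pdt : ∀ ⦃s t⦄, (s, t) ∈ U → F s t ⨯₃ pdt F s t = Complex.I • pdt F s t

namespace IsParaholomorphicOn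

variable {F : ℝ → ℝ → Fin 3 → ℂ} {U : Set (ℝ × ℝ)} {s t : ℝ}

theorem of_cross_eq {I₁ I₂ : Set ℝ} (hI₁ : IsOpen I₁) (hI₂ : IsOpen I₂)
    (hF : DifferentiableOn ℝ (uncurry F) (I₁ ×ˢ I₂))
    (hself : ∀ s ∈ I₁, ∀ t ∈ I₂, F s t ⬝ᵥ F s t = 1)
    (hleft : ∀ s ∈ I₁, ∀ s' ∈ I₁, ∀ t ∈ I₂,
      F s t ⨯₃ F s' t = -Complex.I • (F s' t - F s t))
    (hright : ∀ s ∈ I₁, ∀ t ∈ I₂, ∀ t' ∈ I₂,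
      F s t ⨯₃ F s t' = Complex.I • (F s t' - F s t)) :
    IsParaholomorphicOn F (I₁ ×ˢ I₂) where
  dotProduct_self s t h := hself s h.1 t h.2
  cross_pds s t h :=
    cross_deriv_eq_smul_deriv (u := (F · t))
      (hasDerivAt_pds (hF.differentiableAt ((hI₁.prod hI₂).mem_nhds h)))
      ((hI₁.eventually_mem h.1).mono fun s' hs' => hleft s h.1 s' hs' t h.2)
  cross_pdt s t h :=
    cross_deriv_eq_smul_deriv
      (hasDerivAt_pdt (hF.differentiableAt ((hI₁.prod hI₂).mem_nhds h)))
      ((hI₂.eventually_mem h.2).mono fun t' ht' => hright s h.1 t h.2 t' ht')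

theorem dotProduct_pds (hF : IsParaholomorphicOn F U) (hst : (s, t) ∈ U) :
    F s t ⬝ᵥ pds F s t = 0 :=
  dotProduct_eq_zero_of_cross_eq_smul (neg_ne_zero.2 Complex.I_ne_zero) (hF.cross_pds hst)

theorem dotProduct_pdt (hF : IsParaholomorphicOn F U) (hst : (s, t) ∈ U) :
    F s t ⬝ᵥ pdt F s t = 0 :=
  dotProduct_eq_zero_of_cross_eq_smul Complex.I_ne_zero (hF.cross_pdt hst)

theorem pdt_dotProduct_self (hF : IsParaholomorphicOn F U) (hst : (s, t) ∈ U) :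
    pdt F s t ⬝ᵥ pdt F s t = 0 :=
  dotProduct_self_eq_zero_of_cross_eq_smul Complex.I_ne_zero (hF.cross_pdt hst)

theorem I_smul_pds_pdt (hF : IsParaholomorphicOn F U) (hU : IsOpen U) (hst : (s, t) ∈ U)
    (hF₂ : ContDiffAt ℝ 2 (uncurry F) (s, t)) :
    Complex.I • pds (pdt F) s t = pds F s t ⨯₃ pdt F s t := by
  have hdF := hF₂.differentiableAt two_ne_zero
  have hds := (contDiffAt_pds (m := 1) hF₂ one_add_one_eq_two.le).differentiableAt one_ne_zero
  have hdt := (contDiffAt_pdt (m := 1) hF₂ one_add_one_eq_two.le).differentiableAt one_ne_zero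
  have hs_mem : ∀ᶠ u in 𝓝 s, (u, t) ∈ U :=
    (tendsto_id.prodMk_nhds tendsto_const_nhds).eventually (hU.mem_nhds hst)
  have ht_mem : ∀ᶠ u in 𝓝 t, (s, u) ∈ U :=
    (tendsto_const_nhds.prodMk_nhds tendsto_id).eventually (hU.mem_nhds hst)
  have h₁ : F s t ⨯₃ pds (pdt F) s t + pds F s t ⨯₃ pdt F s t = Complex.I • pds (pdt F) s t :=
    (hasDerivAt_cross (hasDerivAt_pds hdF) (hasDerivAt_pds hdt)).unique
      (((hasDerivAt_pds hdt).const_smul Complex.I).congr_of_eventuallyEq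
        (hs_mem.mono fun _ hu => hF.cross_pdt hu))
  have h₂ : F s t ⨯₃ pds (pdt F) s t + pdt F s t ⨯₃ pds F s t = -Complex.I • pds (pdt F) s t := by
    rw [pds_pdt_comm hF₂]
    exact (hasDerivAt_cross (hasDerivAt_pdt hdF) (hasDerivAt_pdt hds)).unique
      (((hasDerivAt_pdt hds).const_smul (-Complex.I)).congr_of_eventuallyEq
        (ht_mem.mono fun _ hu => hF.cross_pds hu))
  rw [← cross_anticomm (pds F s t)] at h₂
  linear_combination (norm := module) (1 / 2 : ℂ) • h₂ - (1 / 2 : ℂ) • h₁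

theorem pds_pdt_eq (hF : IsParaholomorphicOn F U) (hU : IsOpen U) (hst : (s, t) ∈ U)
    (hF₂ : ContDiffAt ℝ 2 (uncurry F) (s, t)) :
    pds (pdt F) s t = -energyDensity F s t • F s t := by
  have h := smul_cross_eq_dotProduct_smul (hF.cross_pdt hst) (hF.dotProduct_pds hst)
  rw [← hF.I_smul_pds_pdt hU hst hF₂, smul_smul, Complex.I_mul_I, neg_one_smul] at h
  rw [neg_smul, energyDensity, ← h, neg_neg]

theorem coeff_of_pds_pdt_smul_eq_zero (hF : IsParaholomorphicOn F U) (hU : IsOpen U)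
    (hst : (s, t) ∈ U) (hF₂ : ContDiffAt ℝ 2 (uncurry F) (s, t)) {g : ℝ → ℝ → ℂ}
    (hg : ContDiffAt ℝ 2 (uncurry g) (s, t))
    (h : pds (pdt fun s t => g s t • F s t) s t = 0) :
    pdt g s t * energyDensity F s t = 0 ∧ pds (pdt g) s t = g s t * energyDensity F s t := by
  rw [pds_pdt_smul hg hF₂, hF.pds_pdt_eq hU hst hF₂] at h
  have hdot_pdt := congrArg (pdt F s t ⬝ᵥ ·) h
  have hdot_self := congrArg (F s t ⬝ᵥ ·) h
  simp only [energyDensity, dotProduct_add, dotProduct_smul, dotProduct_zero, smul_eq_mul,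
    dotProduct_comm (pdt F s t) (F s t), dotProduct_comm (pdt F s t) (pds F s t),
    hF.dotProduct_self hst, hF.dotProduct_pds hst, hF.dotProduct_pdt hst,
    hF.pdt_dotProduct_self hst] at hdot_pdt hdot_self
  rw [energyDensity]
  exact ⟨by linear_combination hdot_pdt, by linear_combination hdot_self⟩

theorem pds_pdt_eq_zero_of_biharmonic (hF : IsParaholomorphicOn F U) (hU : IsOpen U)
    (hF₃ : ContDiffOn ℝ 3 (uncurry F) U) {r : ℝ → ℝ → ℝ} (hr : ContDiffOn ℝ 2 (uncurry r) U)
    (hr₀ : ∀ ⦃s t⦄, (s, t) ∈ U → r s t ≠ 0)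
    (hbi : ∀ ⦃s t⦄, (s, t) ∈ U → pds (pdt fun s t => r s t • pds (pdt F) s t) s t = 0)
    (hst : (s, t) ∈ U) : pds (pdt F) s t = 0 := by
  have hF₃' : ∀ {s t}, (s, t) ∈ U → ContDiffAt ℝ 3 (uncurry F) (s, t) :=
    fun h => hF₃.contDiffAt (hU.mem_nhds h)
  have hlap : ∀ {s t}, (s, t) ∈ U → pds (pdt F) s t = -energyDensity F s t • F s t :=
    fun h => hF.pds_pdt_eq hU h ((hF₃' h).of_le (by norm_num))
  let g : ℝ → ℝ → ℂ := fun s t => r s t • -energyDensity F s t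
  have hg : ∀ {s t}, (s, t) ∈ U → ContDiffAt ℝ 2 (uncurry g) (s, t) := fun h =>
    (hr.contDiffAt (hU.mem_nhds h)).smul
      (contDiffAt_energyDensity (hF₃' h) two_add_one_eq_three.le).neg
  have hgF : ∀ {s t}, (s, t) ∈ U → pds (pdt fun s t => g s t • F s t) s t = 0 := by
    intro s t h
    rw [← hbi h]
    refine pds_pdt_eq_of_eventuallyEq ?_
    filter_upwards [hU.mem_nhds h] with q hq
    simp only [uncurry, g, hlap (s := q.1) (t := q.2) hq, smul_assoc]
  have hcoeff : ∀ {s t}, (s, t) ∈ U →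
      pdt g s t * energyDensity F s t = 0 ∧ pds (pdt g) s t = g s t * energyDensity F s t :=
    fun h => hF.coeff_of_pds_pdt_smul_eq_zero hU h ((hF₃' h).of_le (by norm_num)) (hg h) (hgF h)
  suffices energyDensity F s t = 0 by rw [hlap hst, this, neg_zero, zero_smul]
  by_contra hne
  have hcont : ContinuousAt (uncurry (energyDensity F)) (s, t) :=
    (contDiffAt_energyDensity (hF₃' hst) two_add_one_eq_three.le).continuousAt
  have hpds : pds (pdt g) s t = 0 := pds_pdt_eq_zero_of_pdt_mul_eq_zero hcont hne <| by
    filter_upwards [hU.mem_nhds hst] with q hq using (hcoeff hq).1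
  rw [(hcoeff hst).2] at hpds
  simp only [g, mul_eq_zero, smul_eq_zero, neg_eq_zero, hr₀ hst, hne, or_self] at hpds

end IsParaholomorphicOn

section SelfDual

/-- The self-dual part of a bivector: `Λ²(ℝ⁴) → ℂ³`,
`ω ↦ (ω₀₁ + i ω₂₃, ω₀₂ + i ω₃₁, ω₀₃ + i ω₁₂)`, which is the usual identification of the
eigenspace of the Hodge star in `Λ²(ℝ⁴) ⊗ ℂ` with `ℂ³`. -/
def selfDualPart : (Fin 4 → Fin 4 → ℝ) →L[ℝ] (Fin 3 → ℂ) :=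
  LinearMap.toContinuousLinearMap
    { toFun := fun ω => ![⟨ω 0 1, ω 2 3⟩, ⟨ω 0 2, ω 3 1⟩, ⟨ω 0 3, ω 1 2⟩]
      map_add' := fun ω η => by ext i; fin_cases i <;> rfl
      map_smul' := fun c ω => by ext i; fin_cases i <;> apply Complex.ext <;> simp }

/-- The antisymmetric array with a given self-dual part: the inverse of `selfDualPart` on
bivectors. -/
def bivectorOfSelfDual : (Fin 3 → ℂ) →L[ℝ] (Fin 4 → Fin 4 → ℝ) :=
  LinearMap.toContinuousLinearMap
    { toFun := fun z =>
        ![![0, (z 0).re, (z 1).re, (z 2).re],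
          ![-(z 0).re, 0, (z 2).im, -(z 1).im],
          ![-(z 1).re, -(z 2).im, 0, (z 0).im],
          ![-(z 2).re, (z 1).im, -(z 0).im, 0]]
      map_add' := fun z w => by
        ext i j; fin_cases i <;> fin_cases j <;> simp [add_comm]
      map_smul' := fun c z => by
        ext i j; fin_cases i <;> fin_cases j <;> simp }

theorem selfDualPart_apply (ω : Fin 4 → Fin 4 → ℝ) :
    selfDualPart ω = ![⟨ω 0 1, ω 2 3⟩, ⟨ω 0 2, ω 3 1⟩, ⟨ω 0 3, ω 1 2⟩] := rfl

theorem bivectorOfSelfDual_selfDualPart {ω : Fin 4 → Fin 4 → ℝ}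
    (hω : ∀ i j, ω i j = -ω j i) : bivectorOfSelfDual (selfDualPart ω) = ω := by
  have hdiag : ∀ i, ω i i = 0 := fun i => self_eq_neg.1 (hω i i)
  ext i j
  fin_cases i <;> fin_cases j <;>
    simp [bivectorOfSelfDual, selfDualPart_apply, hdiag, ← hω]

theorem wedge_antisymm (v w : Fin 4 → ℝ) (i j : Fin 4) : wedge v w i j = -wedge v w j i :=
  (neg_sub _ _).symm

theorem wedge_anticomm (v w : Fin 4 → ℝ) : wedge v w = -wedge w v := by
  ext i j
  simp only [wedge, Pi.neg_apply]
  ring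

theorem B4_comm (v w : Fin 4 → ℝ) : B4 v w = B4 w v := by
  unfold B4
  ring

theorem selfDualPart_wedge_dotProduct_self (a b : Fin 4 → ℝ) :
    selfDualPart (wedge a b) ⬝ᵥ selfDualPart (wedge a b) =
      ((B4 a b ^ 2 - B4 a a * B4 b b : ℝ) : ℂ) := by
  rw [Matrix.vec3_dotProduct]
  apply Complex.ext
  · rw [Complex.ofReal_re]
    simp only [selfDualPart_apply, wedge, B4, Matrix.cons_val, Complex.add_re, Complex.mul_re]
    ring
  · rw [Complex.ofReal_im]
    simp only [selfDualPart_apply, wedge, Matrix.cons_val, Complex.add_im, Complex.mul_im]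
    ring

theorem selfDualPart_wedge_cross (a b c : Fin 4 → ℝ) :
    selfDualPart (wedge a b) ⨯₃ selfDualPart (wedge a c) =
      Complex.I • selfDualPart
        (B4 a a • wedge b c - B4 a b • wedge a c + B4 a c • wedge a b) := by
  ext i
  fin_cases i <;> apply Complex.ext <;>
    simp only [cross_apply, selfDualPart_apply, wedge, B4, Fin.zero_eta, Fin.mk_one,
      Fin.reduceFinMk, Matrix.cons_val, Pi.add_apply, Pi.sub_apply, Pi.smul_apply, smul_eq_mul,
      Complex.sub_re, Complex.sub_im, Complex.mul_re, Complex.mul_im,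
      Complex.I_re, Complex.I_im] <;>
    ring

end SelfDual

section GaussMap

variable {α β : ℝ → Fin 4 → ℝ} {s s' t t' : ℝ} {I₁ I₂ : Set ℝ} {n : WithTop ℕ∞}

theorem bivectorOfSelfDual_selfDualPart_gaussMap (α β : ℝ → Fin 4 → ℝ) (s t : ℝ) :
    bivectorOfSelfDual (selfDualPart (gaussMap α β s t)) = gaussMap α β s t := by
  rw [gaussMap, map_smul, map_smul, bivectorOfSelfDual_selfDualPart (wedge_antisymm _ _)]

theorem selfDualPart_gaussMap_dotProduct_self (hα : B4 (deriv α s) (deriv α s) = 0)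
    (hne : B4 (deriv α s) (deriv β t) ≠ 0) :
    selfDualPart (gaussMap α β s t) ⬝ᵥ selfDualPart (gaussMap α β s t) = 1 := by
  rw [gaussMap, map_smul, smul_dotProduct, dotProduct_smul, selfDualPart_wedge_dotProduct_self, hα,
    zero_mul, sub_zero, Complex.real_smul, Complex.real_smul, msq]
  norm_cast
  field_simp

theorem gaussMap_swap (α β : ℝ → Fin 4 → ℝ) (s t : ℝ) : gaussMap β α t s = -gaussMap α β s t := by
  rw [gaussMap, gaussMap, msq, msq, wedge_anticomm, B4_comm, smul_neg]

theorem selfDualPart_gaussMap_cross_right (hα : B4 (deriv α s) (deriv α s) = 0)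
    (hne : B4 (deriv α s) (deriv β t) ≠ 0) (hne' : B4 (deriv α s) (deriv β t') ≠ 0) :
    selfDualPart (gaussMap α β s t) ⨯₃ selfDualPart (gaussMap α β s t') =
      Complex.I • (selfDualPart (gaussMap α β s t') - selfDualPart (gaussMap α β s t)) := by
  have hcast : (B4 (deriv α s) (deriv β t) : ℂ) ≠ 0 := by exact_mod_cast hne
  have hcast' : (B4 (deriv α s) (deriv β t') : ℂ) ≠ 0 := by exact_mod_cast hne'
  simp only [gaussMap, msq, map_smul, LinearMap.map_smul_of_tower, LinearMap.smul_apply,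
    selfDualPart_wedge_cross, hα, zero_smul, zero_sub, map_add, map_neg]
  match_scalars <;> simp only [Complex.coe_algebraMap] <;> field_simp

theorem selfDualPart_gaussMap_cross_left (hβ : B4 (deriv β t) (deriv β t) = 0)
    (hne : B4 (deriv α s) (deriv β t) ≠ 0) (hne' : B4 (deriv α s') (deriv β t) ≠ 0) :
    selfDualPart (gaussMap α β s t) ⨯₃ selfDualPart (gaussMap α β s' t) =
      -Complex.I • (selfDualPart (gaussMap α β s' t) - selfDualPart (gaussMap α β s t)) := by
  have h := selfDualPart_gaussMap_cross_right (β := α) (t := s) (t' := s') hβ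
    (by rwa [B4_comm]) (by rwa [B4_comm])
  simp only [gaussMap_swap α β, map_neg, LinearMap.neg_apply, neg_neg] at h
  rw [h]
  module

theorem two_div_msq_ne_zero (hne : B4 (deriv α s) (deriv β t) ≠ 0) : 2 / msq α β s t ≠ 0 :=
  div_ne_zero two_ne_zero (neg_ne_zero.2 hne)

theorem contDiffOn_msq (hα : ContDiffOn ℝ n (deriv α) I₁) (hβ : ContDiffOn ℝ n (deriv β) I₂) :
    ContDiffOn ℝ n (uncurry (msq α β)) (I₁ ×ˢ I₂) := by
  have hα' := contDiffOn_pi.1 (hα.comp (s := I₁ ×ˢ I₂) contDiffOn_fst fun _ hq => hq.1)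
  have hβ' := contDiffOn_pi.1 (hβ.comp (s := I₁ ×ˢ I₂) contDiffOn_snd fun _ hq => hq.2)
  exact (((((hα' 0).mul (hβ' 0)).neg.add ((hα' 1).mul (hβ' 1))).add
    ((hα' 2).mul (hβ' 2))).add ((hα' 3).mul (hβ' 3))).neg

theorem contDiffOn_div_msq (hα : ContDiffOn ℝ n (deriv α) I₁)
    (hβ : ContDiffOn ℝ n (deriv β) I₂)
    (hne : ∀ s ∈ I₁, ∀ t ∈ I₂, B4 (deriv α s) (deriv β t) ≠ 0) (c : ℝ) :
    ContDiffOn ℝ n (uncurry fun s t => c / msq α β s t) (I₁ ×ˢ I₂) :=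
  contDiffOn_const.div (contDiffOn_msq hα hβ) fun q hq => neg_ne_zero.2 (hne q.1 hq.1 q.2 hq.2)

theorem contDiffOn_gaussMap (hα : ContDiffOn ℝ n (deriv α) I₁)
    (hβ : ContDiffOn ℝ n (deriv β) I₂)
    (hne : ∀ s ∈ I₁, ∀ t ∈ I₂, B4 (deriv α s) (deriv β t) ≠ 0) :
    ContDiffOn ℝ n (uncurry (gaussMap α β)) (I₁ ×ˢ I₂) := by
  have hα' := contDiffOn_pi.1 (hα.comp (s := I₁ ×ˢ I₂) contDiffOn_fst fun _ hq => hq.1)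
  have hβ' := contDiffOn_pi.1 (hβ.comp (s := I₁ ×ˢ I₂) contDiffOn_snd fun _ hq => hq.2)
  exact (contDiffOn_div_msq hα hβ hne 1).smul <| contDiffOn_pi.2 fun i => contDiffOn_pi.2 fun j =>
    ((hα' i).mul (hβ' j)).sub ((hα' j).mul (hβ' i))

theorem isParaholomorphicOn_selfDualPart_gaussMap (hI₁ : IsOpen I₁) (hI₂ : IsOpen I₂)
    (hF : DifferentiableOn ℝ (uncurry fun s t => selfDualPart (gaussMap α β s t)) (I₁ ×ˢ I₂))
    (hα : ∀ s ∈ I₁, B4 (deriv α s) (deriv α s) = 0)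
    (hβ : ∀ t ∈ I₂, B4 (deriv β t) (deriv β t) = 0)
    (hne : ∀ s ∈ I₁, ∀ t ∈ I₂, B4 (deriv α s) (deriv β t) ≠ 0) :
    IsParaholomorphicOn (fun s t => selfDualPart (gaussMap α β s t)) (I₁ ×ˢ I₂) :=
  .of_cross_eq hI₁ hI₂ hF
    (fun s hs t ht => selfDualPart_gaussMap_dotProduct_self (hα s hs) (hne s hs t ht))
    (fun s hs s' hs' t ht =>
      selfDualPart_gaussMap_cross_left (hβ t ht) (hne s hs t ht) (hne s' hs' t ht))
    (fun s hs t ht t' ht' =>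
      selfDualPart_gaussMap_cross_right (hα s hs) (hne s hs t ht) (hne s hs t' ht'))

theorem pds_pdt_eq_zero_of_lap_eq_zero {ξ : ℝ → ℝ → Fin 4 → Fin 4 → ℝ}
    (hne : B4 (deriv α s) (deriv β t) ≠ 0) (h : lap α β ξ s t = 0) : pds (pdt ξ) s t = 0 :=
  (smul_eq_zero.1 h).resolve_left (two_div_msq_ne_zero hne)

end GaussMap

theorem biharmonic_gaussMap_is_harmonic_general
    {I₁ I₂ : Set ℝ} (hI₁ : IsOpen I₁) (hI₂ : IsOpen I₂) {α β : ℝ → Fin 4 → ℝ}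
    (hα : ContDiffOn ℝ 5 α I₁) (hβ : ContDiffOn ℝ 5 β I₂)
    (hαnull : ∀ s ∈ I₁, B4 (deriv α s) (deriv α s) = 0)
    (hβnull : ∀ t ∈ I₂, B4 (deriv β t) (deriv β t) = 0)
    (hne : ∀ s ∈ I₁, ∀ t ∈ I₂, B4 (deriv α s) (deriv β t) ≠ 0)
    (hbih : ∀ s ∈ I₁, ∀ t ∈ I₂, lap α β (lap α β (gaussMap α β)) s t = 0) :
    ∀ s ∈ I₁, ∀ t ∈ I₂, lap α β (gaussMap α β) s t = 0 := by
  have hU := hI₁.prod hI₂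
  have hα' : ContDiffOn ℝ 4 (deriv α) I₁ := hα.deriv_of_isOpen hI₁ (by norm_num)
  have hβ' : ContDiffOn ℝ 4 (deriv β) I₂ := hβ.deriv_of_isOpen hI₂ (by norm_num)
  have hν : ContDiffOn ℝ 4 (uncurry (gaussMap α β)) (I₁ ×ˢ I₂) := contDiffOn_gaussMap hα' hβ' hne
  have hr : ContDiffOn ℝ 2 (uncurry fun s t => 2 / msq α β s t) (I₁ ×ˢ I₂) :=
    (contDiffOn_div_msq hα' hβ' hne 2).of_le (by norm_num)
  have hF : ContDiffOn ℝ 4 (uncurry fun s t => selfDualPart (gaussMap α β s t)) (I₁ ×ˢ I₂) :=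
    hν.continuousLinearMap_comp selfDualPart
  have hF_para := isParaholomorphicOn_selfDualPart_gaussMap hI₁ hI₂
    (hF.differentiableOn four_ne_zero) hαnull hβnull hne
  intro s hs t ht
  have hF_harmonic : pds (pdt fun s t => selfDualPart (gaussMap α β s t)) s t = 0 := by
    refine hF_para.pds_pdt_eq_zero_of_biharmonic hU (hF.of_le (by norm_num)) hr
      (fun s t h => two_div_msq_ne_zero (hne s h.1 t h.2)) (fun s t h => ?_) ⟨hs, ht⟩
    rw [pds_pdt_smul_pds_pdt_clm_apply selfDualPart (hr.contDiffAt (hU.mem_nhds h))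
      (hν.contDiffAt (hU.mem_nhds h))]
    exact (congrArg selfDualPart (pds_pdt_eq_zero_of_lap_eq_zero (hne s h.1 t h.2)
      (hbih s h.1 t h.2))).trans (map_zero _)
  have hν_harmonic : pds (pdt (gaussMap α β)) s t = 0 := by
    have h := pds_pdt_clm_apply bivectorOfSelfDual
      ((hF.contDiffAt (hU.mem_nhds ⟨hs, ht⟩)).of_le (by norm_num))
    simpa only [bivectorOfSelfDual_selfDualPart_gaussMap, hF_harmonic, map_zero] using h
  rw [lap, hν_harmonic, smul_zero]

/-- Corollary 4.3: if the Gauss map of a minimal Lorentzian surface in `𝔼⁴₁` is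
biharmonic (`Δ²ν = 0`), then it is harmonic (`Δν = 0`). -/
theorem biharmonic_gaussMap_is_harmonic
    (I₁ I₂ : Set ℝ) (hI₁ : IsOpen I₁) (hI₂ : IsOpen I₂)
    (hI₁' : I₁.OrdConnected) (hI₂' : I₂.OrdConnected)
    (α β : ℝ → Fin 4 → ℝ)
    (hα : ContDiffOn ℝ (⊤ : ℕ∞) α I₁) (hβ : ContDiffOn ℝ (⊤ : ℕ∞) β I₂)
    (hαnull : ∀ s ∈ I₁, B4 (deriv α s) (deriv α s) = 0)
    (hβnull : ∀ t ∈ I₂, B4 (deriv β t) (deriv β t) = 0)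
    (hneg : ∀ s ∈ I₁, ∀ t ∈ I₂, B4 (deriv α s) (deriv β t) < 0)
    (hbih : ∀ s ∈ I₁, ∀ t ∈ I₂, lap α β (lap α β (gaussMap α β)) s t = 0) :
    ∀ s ∈ I₁, ∀ t ∈ I₂, lap α β (gaussMap α β) s t = 0 := by
  exact biharmonic_gaussMap_is_harmonic_general hI₁ hI₂ (contDiffOn_infty.1 hα 5)
    (contDiffOn_infty.1 hβ 5) hαnull hβnull (fun s hs t ht => (hneg s hs t ht).ne) hbih
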